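/- Let n ≥ 2, let (F_i)_{i : Fin n} be a family of monotone coordinate-update maps on Fin n → Bool, let π be a permutation of Fin n, and let F_π := F_{π(n-1)} ∘ ⋯ ∘ F_{π(0)}. If X is a periodic point of F_π (F_π^[p] X = X for some p ≥ 1), then the orbit {Y | ∃ k, F_π^[k] X = Y} has cardinality strictly less than the binomial coefficient choose(n, ⌊n/2⌋). In other words, the size of any limit cycle of a monotone SDS on n ≥ 2 vertices is strictly less than choose(n, ⌊n/2⌋). -/

import Mathlib

/-- The SDS map `F_{π(n-1)} ∘ ⋯ ∘ F_{π(1)} ∘ F_{π(0)}`: vertex `π 0` is updated first. -/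
def seqComp {n : ℕ} (F : Fin n → (Fin n → Bool) → (Fin n → Bool))
    (π : Equiv.Perm (Fin n)) (X : Fin n → Bool) : Fin n → Bool :=
  (List.finRange n).foldl (fun Y i => F (π i) Y) X

open Finset in
lemma aux_choose_lt {n j : ℕ} (h : j < n / 2) : n.choose j < n.choose (n / 2) := by
  refine lt_of_lt_of_le ?_ (Nat.choose_le_middle (j+1) n)
  have h1 := Nat.choose_succ_right_eq n j
  have h2 : 0 < n.choose j := Nat.choose_pos (by omega)
  have h3 : j + 1 < n - j := by omega
  by_contra hcon
  push Not at hcon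
  have h4 : n.choose (j+1) * (j+1) ≤ n.choose j * (j+1) := Nat.mul_le_mul_right _ hcon
  have h5 : n.choose j * (j+1) < n.choose j * (n - j) := Nat.mul_lt_mul_of_pos_left h3 h2
  omega

lemma aux_choose_eq {n j : ℕ} (hj : j ≤ n) (h : n.choose j = n.choose (n / 2)) :
    j = n / 2 ∨ j = n - n / 2 := by
  by_contra hcon
  push Not at hcon
  rcases lt_or_ge j (n/2) with h1 | h1
  · have := aux_choose_lt h1
    omega
  · have h2 : n - j < n / 2 := by omega
    have := aux_choose_lt h2
    rw [Nat.choose_symm hj] at this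
    omega

open Finset in
lemma aux_sizes {n : ℕ} (A : Finset (Finset (Fin n)))
    (hA : IsAntichain (· ⊆ ·) (A : Set (Finset (Fin n))))
    (hc : #A = n.choose (n / 2)) : ∀ s ∈ A, #s = n / 2 ∨ #s = n - n / 2 := by
  intro s hs
  have hsn : #s ≤ n := by simpa using s.card_le_univ
  apply aux_choose_eq hsn
  by_contra hne
  have hlt : n.choose #s < n.choose (n/2) := lt_of_le_of_ne (Nat.choose_le_middle _ _) hne
  have hpos : (0:ℚ) < n.choose (n/2) := by exact_mod_cast Nat.choose_pos (Nat.div_le_self _ _)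
  have h1 := Finset.lubell_yamamoto_meshalkin_inequality_sum_inv_choose (𝕜 := ℚ) hA
  rw [Fintype.card_fin] at h1
  have h2 : ∑ s ∈ A, ((n.choose (n/2) : ℚ))⁻¹ < ∑ s ∈ A, ((n.choose #s : ℚ))⁻¹ := by
    apply Finset.sum_lt_sum
    · intro t ht
      have : 0 < n.choose #t := Nat.choose_pos (by simpa using t.card_le_univ)
      have h' := Nat.choose_le_middle #t n
      gcongr
    · refine ⟨s, hs, ?_⟩
      have : 0 < n.choose #s := Nat.choose_pos hsn
      gcongr
  rw [Finset.sum_const, hc, nsmul_eq_mul, mul_inv_cancel₀ hpos.ne'] at h2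
  linarith

open Finset in
open scoped FinsetFamily in
lemma aux_shadow {n k : ℕ} (hnk : n = 2 * k + 1) (T : Finset (Finset (Fin n)))
    (hT : ∀ t ∈ T, #t = k + 1) (hc : #(∂ T) ≤ #T) :
    ∀ s ∈ ∂ T, ∀ b, b ∉ s → insert b s ∈ T := by
  have hS : ∀ s ∈ ∂ T, #s = k := by
    intro s hs
    obtain ⟨t, ht, a, ha, rfl⟩ := mem_shadow_iff.1 hs
    rw [card_erase_of_mem ha, hT t ht]; rfl
  have hsub : ∀ s ∈ ∂ T, {t ∈ T | s ⊆ t} ⊆ sᶜ.image (fun b => insert b s) := by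
    intro s hs t ht
    rw [mem_filter] at ht
    obtain ⟨a, ha, rfl⟩ := exists_eq_insert_iff.2 ⟨ht.2, by rw [hT t ht.1, hS s hs]⟩
    exact mem_image_of_mem _ (mem_compl.2 ha)
  have himg : ∀ s ∈ ∂ T, #(sᶜ.image (fun b => insert b s)) = k + 1 := by
    intro s hs
    rw [card_image_of_injOn (insert_inj_on' _), card_compl, hS s hs, Fintype.card_fin]
    omega
  have hle : ∀ s ∈ ∂ T, #{t ∈ T | s ⊆ t} ≤ k + 1 := fun s hs =>
    (card_le_card (hsub s hs)).trans (himg s hs).le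
  have hcount : ∑ s ∈ ∂ T, #{t ∈ T | s ⊆ t} = ∑ t ∈ T, #{s ∈ ∂ T | s ⊆ t} := by
    simp_rw [card_filter]
    exact sum_comm
  have hge : ∑ t ∈ T, (k + 1) ≤ ∑ t ∈ T, #{s ∈ ∂ T | s ⊆ t} := by
    refine sum_le_sum fun t ht => ?_
    rw [← hT t ht, ← card_image_of_injOn t.erase_injOn]
    refine card_le_card ?_
    simp_rw [image_subset_iff, mem_filter]
    exact fun a ha => ⟨erase_mem_shadow ht ha, erase_subset _ _⟩
  have heq : ∑ s ∈ ∂ T, #{t ∈ T | s ⊆ t} = ∑ s ∈ ∂ T, (k + 1) := by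
    apply le_antisymm (sum_le_sum hle)
    rw [hcount]
    refine le_trans ?_ hge
    simp only [sum_const, smul_eq_mul]
    exact Nat.mul_le_mul_right _ hc
  have hall := (sum_eq_sum_iff_of_le hle).1 heq
  intro s hs b hb
  have := eq_of_subset_of_card_le (hsub s hs) (by rw [himg s hs, hall s hs])
  have hm : insert b s ∈ sᶜ.image (fun b => insert b s) :=
    mem_image_of_mem _ (mem_compl.2 hb)
  rw [← this] at hm
  exact (mem_filter.1 hm).1

open Finset in
lemma aux_swap {n r : ℕ} (T : Finset (Finset (Fin n))) (hT : ∀ t ∈ T, #t = r)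
    (hsw : ∀ t ∈ T, ∀ a ∈ t, ∀ b, b ∉ t → insert b (t.erase a) ∈ T)
    (u : Finset (Fin n)) (hu : #u = r) :
    ∀ m, ∀ t ∈ T, #(u \ t) = m → u ∈ T := by
  intro m
  induction m with
  | zero =>
    intro t ht h
    have h1 : u ⊆ t := by simpa using h
    have : u = t := eq_of_subset_of_card_le h1 (by rw [hu, hT t ht])
    rwa [this]
  | succ m ih =>
    intro t ht h
    obtain ⟨b, hb⟩ : (u \ t).Nonempty := card_pos.1 (by omega)
    have h2 : #(t \ u) = #(u \ t) := by
      have e1 := card_sdiff_add_card_inter t u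
      have e2 := card_sdiff_add_card_inter u t
      rw [inter_comm u t] at e2
      have := hT t ht
      omega
    obtain ⟨a, ha⟩ : (t \ u).Nonempty := card_pos.1 (by omega)
    rw [mem_sdiff] at ha hb
    refine ih _ (hsw t ht a ha.1 b hb.2) ?_
    have : u \ insert b (t.erase a) = (u \ t).erase b := by
      ext x
      simp only [mem_sdiff, mem_insert, mem_erase]
      grind
    rw [this, card_erase_of_mem (by simp [hb]), h]; rfl

open Finset in
open scoped FinsetFamily in
lemma aux_unique {n : ℕ} (A : Finset (Finset (Fin n)))
    (hA : IsAntichain (· ⊆ ·) (A : Set (Finset (Fin n))))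
    (hc : #A = n.choose (n / 2)) : ∃ r, A = powersetCard r univ := by
  have hs := aux_sizes A hA hc
  rcases Nat.even_or_odd' n with ⟨k, rfl | rfl⟩
  · refine ⟨2 * k / 2, eq_of_subset_of_card_le ?_ (by simp [hc])⟩
    intro s h
    have := hs s h
    rw [mem_powersetCard]
    refine ⟨subset_univ _, by omega⟩
  · have e : (2 * k + 1) / 2 = k := by omega
    have hs' : ∀ s ∈ A, #s = k ∨ #s = k + 1 := by
      intro s h
      have := hs s h
      omega
    rw [e] at hc
    set T := A.filter (fun s => #s = k + 1) with hTd
    set U := A.filter (fun s => ¬ #s = k + 1) with hUd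
    have hTU : #T + #U = #A := card_filter_add_card_filter_not _
    have hT : ∀ t ∈ T, #t = k + 1 := fun t ht => (mem_filter.1 ht).2
    have hdis : Disjoint (∂ T) U := by
      rw [disjoint_left]
      intro s h1 h2
      obtain ⟨t, ht, a, ha, rfl⟩ := mem_shadow_iff.1 h1
      have h3 := hA (mem_filter.1 h2).1 (mem_filter.1 ht).1
        (fun h => by rw [h] at h2; exact (mem_filter.1 h2).2 (hT t ht))
      exact h3 (erase_subset _ _)
    have hsub : ∂ T ∪ U ⊆ powersetCard k univ := by
      intro s h
      rw [mem_powersetCard]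
      refine ⟨subset_univ _, ?_⟩
      rcases mem_union.1 h with h | h
      · obtain ⟨t, ht, a, ha, rfl⟩ := mem_shadow_iff.1 h
        rw [card_erase_of_mem ha, hT t ht]; rfl
      · have h1 := mem_filter.1 h
        exact (hs' s h1.1).resolve_right h1.2
    have hcard := card_le_card hsub
    rw [card_union_of_disjoint hdis, card_powersetCard, card_univ, Fintype.card_fin] at hcard
    have hsh := aux_shadow rfl T hT (by omega)
    rcases T.eq_empty_or_nonempty with hE | ⟨t, ht⟩
    · refine ⟨k, eq_of_subset_of_card_le ?_ (by simp [hc])⟩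
      intro s h
      rw [mem_powersetCard]
      refine ⟨subset_univ _, (hs' s h).resolve_right fun h' => ?_⟩
      have : s ∈ T := mem_filter.2 ⟨h, h'⟩
      simp [hE] at this
    · refine ⟨k + 1, (eq_of_subset_of_card_le ?_ ?_).symm⟩
      · intro u hu
        have hu' := (mem_powersetCard.1 hu).2
        have : u ∈ T := by
          refine aux_swap T hT ?_ u hu' _ t ht rfl
          intro t ht a ha b hb
          exact hsh _ (erase_mem_shadow ht ha) b (by simp [hb])
        exact (mem_filter.1 this).1
      · rw [hc, card_powersetCard, card_univ, Fintype.card_fin]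
        exact (Nat.choose_symm_half k).ge

open Finset in
/-- support of a state -/
def supp {n : ℕ} (X : Fin n → Bool) : Finset (Fin n) := univ.filter (fun i => X i = true)

lemma mem_supp {n : ℕ} (X : Fin n → Bool) (i : Fin n) : i ∈ supp X ↔ X i = true := by
  simp [supp]

lemma supp_le {n : ℕ} {X Y : Fin n → Bool} : supp X ⊆ supp Y ↔ X ≤ Y := by
  simp only [Finset.subset_iff, mem_supp, Pi.le_def]
  exact forall_congr' fun i => by cases X i <;> cases Y i <;> simp

lemma supp_inj {n : ℕ} : Function.Injective (supp (n := n)) := fun X Y h =>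
  le_antisymm (supp_le.1 h.le) (supp_le.1 h.ge)

lemma supp_surj {n : ℕ} (s : Finset (Fin n)) : ∃ X, supp X = s :=
  ⟨fun i => decide (i ∈ s), by ext; simp [mem_supp]⟩

open Finset in
lemma supp_antichain {n : ℕ} {A : Finset (Fin n → Bool)}
    (hA : ∀ x ∈ A, ∀ y ∈ A, x ≤ y → x = y) :
    IsAntichain (· ⊆ ·) ((A.image supp : Finset (Finset (Fin n))) : Set (Finset (Fin n))) := by
  intro s hs t ht hne hst
  simp only [coe_image, Set.mem_image, mem_coe] at hs ht
  obtain ⟨x, hx, rfl⟩ := hs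
  obtain ⟨y, hy, rfl⟩ := ht
  exact hne (by rw [hA x hx y hy (supp_le.1 hst)])

open Finset in
lemma layer {n : ℕ} (A : Finset (Fin n → Bool))
    (hA : ∀ x ∈ A, ∀ y ∈ A, x ≤ y → x = y) (hc : #A = n.choose (n / 2)) :
    ∃ r, n.choose r = n.choose (n/2) ∧ ∀ x, x ∈ A ↔ #(supp x) = r := by
  obtain ⟨r, hr⟩ := aux_unique (A.image supp) (supp_antichain hA)
    (by rw [card_image_of_injective _ supp_inj, hc])
  refine ⟨r, ?_, fun x => ?_⟩
  · rw [← hc, ← card_image_of_injective A supp_inj, hr]; simp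
  · rw [← supp_inj.mem_finset_image (s := A), hr, mem_powersetCard]; simp

open Finset in
lemma step {n : ℕ} (hn : 2 ≤ n) (f : (Fin n → Bool) → (Fin n → Bool)) (i : Fin n)
    (hf : ∀ X j, j ≠ i → f X j = X j) (A : Finset (Fin n → Bool))
    (hA : ∀ x ∈ A, ∀ y ∈ A, x ≤ y → x = y) (hc : #A = n.choose (n / 2))
    (hB : ∀ x ∈ A, ∀ y ∈ A, f x ≤ f y → x = y) : ∀ x ∈ A, f x = x := by
  obtain ⟨r, hr, hAr⟩ := layer A hA hc
  have hinj : Set.InjOn f A := fun x hx y hy h => hB x hx y hy h.le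
  obtain ⟨m, hm, hBm⟩ := layer (A.image f) (by
    intro x hx y hy h
    obtain ⟨x, hx', rfl⟩ := mem_image.1 hx
    obtain ⟨y, hy', rfl⟩ := mem_image.1 hy
    rw [hB x hx' y hy' h]) (by rw [card_image_of_injOn hinj, hc])
  have hbig : 2 ≤ n.choose (n/2) := by
    have := Nat.choose_le_middle 1 n
    rw [Nat.choose_one_right] at this
    omega
  have hr0 : 1 ≤ r := by
    by_contra h
    have : r = 0 := by omega
    subst this
    simp at hr
    omega
  have hrn : r ≤ n - 1 := by
    by_contra h
    rcases (by omega : r = n ∨ n < r) with h | h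
    · subst h
      simp at hr
      omega
    · rw [Nat.choose_eq_zero_of_lt h] at hr
      omega
  have herase : ∀ x, (supp (f x)).erase i = (supp x).erase i := by
    intro x
    ext j
    simp only [mem_erase, mem_supp]
    refine and_congr_right fun h => by rw [hf x j h]
  have hfm : ∀ x ∈ A, #(supp (f x)) = m := fun x hx => (hBm _).1 (mem_image_of_mem _ hx)
  have key : ∀ x, #(supp (f x)) = #(supp x) → f x = x := by
    intro x h
    apply supp_inj
    have h1 := herase x
    by_cases ha : i ∈ supp (f x) <;> by_cases hb : i ∈ supp x
    · rw [← insert_erase ha, h1, insert_erase hb]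
    · have := card_erase_of_mem ha
      have := card_pos.2 ⟨i, ha⟩
      rw [h1, erase_eq_of_notMem hb] at *
      omega
    · have := card_erase_of_mem hb
      have := card_pos.2 ⟨i, hb⟩
      rw [← h1, erase_eq_of_notMem ha] at *
      omega
    · rwa [erase_eq_of_notMem ha, erase_eq_of_notMem hb] at h1
  have hmr : m ≤ r := by
    obtain ⟨s, hs1, hs2, hs3⟩ := exists_subsuperset_card_eq (n := r) (subset_univ {i})
      (by simpa using hr0) (by simp; omega)
    obtain ⟨x, rfl⟩ := supp_surj s
    rw [← hfm x ((hAr x).2 hs3)]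
    have hi : i ∈ supp x := hs1 (mem_singleton_self i)
    rw [← hs3]
    have h1 := card_erase_of_mem hi
    have h2 := card_pos.2 ⟨i, hi⟩
    have h3 := pred_card_le_card_erase (s := supp (f x)) (a := i)
    rw [herase] at h3
    omega
  have hrm : r ≤ m := by
    obtain ⟨s, hs1, hs2⟩ := exists_subset_card_eq (s := univ.erase i) (n := r)
      (by rw [card_erase_of_mem (mem_univ _)]; simpa using hrn)
    obtain ⟨x, rfl⟩ := supp_surj s
    rw [← hfm x ((hAr x).2 hs2)]
    have hi : i ∉ supp x := fun h => by simpa using hs1 h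
    rw [← hs2, ← erase_eq_of_notMem hi, ← herase]
    exact card_le_card (erase_subset _ _)
  intro x hx
  apply key
  rw [hfm x hx, (hAr x).1 hx]
  omega

open Finset in
lemma foldl_mono {n : ℕ} (F : Fin n → (Fin n → Bool) → (Fin n → Bool))
    (hmono : ∀ i : Fin n, Monotone (F i)) (π : Equiv.Perm (Fin n)) (l : List (Fin n)) :
    Monotone (fun X => l.foldl (fun Y i => F (π i) Y) X) := by
  induction l with
  | nil => exact monotone_id
  | cons a l ih => exact ih.comp (hmono (π a))

open Finset in
lemma initial_id {n : ℕ} (hn : 2 ≤ n)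
    (F : Fin n → (Fin n → Bool) → (Fin n → Bool))
    (hupd : ∀ (i : Fin n) (X : Fin n → Bool) (j : Fin n), j ≠ i → F i X j = X j)
    (hmono : ∀ i : Fin n, Monotone (F i)) (π : Equiv.Perm (Fin n))
    (A : Finset (Fin n → Bool))
    (hA : ∀ x ∈ A, ∀ y ∈ A, x ≤ y → x = y) (hc : #A = n.choose (n / 2))
    (hmap : ∀ x ∈ A, seqComp F π x ∈ A)
    (hinj : ∀ x ∈ A, ∀ y ∈ A, seqComp F π x = seqComp F π y → x = y) (l : List (Fin n)) :
    ∀ l', List.finRange n = l ++ l' →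
      ∀ x ∈ A, l.foldl (fun Y i => F (π i) Y) x = x := by
  induction l using List.reverseRecOn with
  | nil => intros; rfl
  | append_singleton l a ih =>
    intro l' hl
    have hid := ih ([a] ++ l') (by simpa using hl)
    have hst : ∀ x ∈ A, F (π a) x = x := by
      refine step hn (F (π a)) (π a) (hupd _) A hA hc ?_
      intro x hx y hy h
      have e : ∀ x ∈ A, seqComp F π x = l'.foldl (fun Y i => F (π i) Y) (F (π a) x) := by
        intro x hx
        rw [seqComp, hl, List.foldl_append, List.foldl_append, hid x hx]
        rfl
      apply hinj x hx y hy
      apply hA _ (hmap x hx) _ (hmap y hy)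
      rw [e x hx, e y hy]
      exact foldl_mono F hmono π l' h
    intro x hx
    rw [List.foldl_append, hid x hx]
    exact hst x hx

theorem stmt_12 {n : ℕ} (hn : 2 ≤ n)
    (F : Fin n → (Fin n → Bool) → (Fin n → Bool))
    (hupd : ∀ (i : Fin n) (X : Fin n → Bool) (j : Fin n), j ≠ i → F i X j = X j)
    (hmono : ∀ i : Fin n, Monotone (F i))
    (π : Equiv.Perm (Fin n)) (X : Fin n → Bool)
    (p : ℕ) (hp : 1 ≤ p) (hper : (seqComp F π)^[p] X = X) :
    ({Y : Fin n → Bool | ∃ k : ℕ, (seqComp F π)^[k] X = Y}).ncard <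
      Nat.choose n (n / 2) := by
  classical
  set Φ := seqComp F π with hΦ
  have hΦm : Monotone Φ := foldl_mono F hmono π _
  set O : Set (Fin n → Bool) := {Y : Fin n → Bool | ∃ k : ℕ, Φ^[k] X = Y} with hO
  have hfin : O.Finite := Set.toFinite _
  set A : Finset (Fin n → Bool) := hfin.toFinset with hAd
  have hmem : ∀ x, x ∈ A ↔ ∃ k : ℕ, Φ^[k] X = x := fun x => by simp [hAd, hO]
  have hcard : O.ncard = A.card := Set.ncard_eq_toFinset_card O hfin
  have hperA : ∀ x ∈ A, Φ^[p] x = x := by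
    intro x hx
    obtain ⟨k, rfl⟩ := (hmem x).1 hx
    rw [← Function.iterate_add_apply, add_comm, Function.iterate_add_apply, hper]
  have hmap : ∀ x ∈ A, Φ x ∈ A := by
    intro x hx
    obtain ⟨k, rfl⟩ := (hmem x).1 hx
    exact (hmem _).2 ⟨k + 1, Function.iterate_succ_apply' _ _ _⟩
  have hinj : ∀ x ∈ A, ∀ y ∈ A, Φ x = Φ y → x = y := by
    intro x hx y hy h
    rw [← hperA x hx, ← hperA y hy]
    obtain ⟨q, rfl⟩ : ∃ q, p = q + 1 := ⟨p - 1, by omega⟩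
    rw [Function.iterate_succ_apply, Function.iterate_succ_apply, h]
  have hpmul : ∀ a, ∀ x, Φ^[p] x = x → Φ^[p * a] x = x := by
    intro a x hx
    rw [Function.iterate_mul]
    exact Function.iterate_fixed hx a
  have hanti : ∀ x ∈ A, ∀ y ∈ A, x ≤ y → x = y := by
    intro x hx y hy hxy
    obtain ⟨a, ha⟩ := (hmem x).1 hx
    obtain ⟨b, hb⟩ := (hmem y).1 hy
    obtain ⟨q, hq⟩ : ∃ q, p = q + 1 := ⟨p - 1, by omega⟩
    have hc : Φ^[b + q * a] x = y := by
      rw [← ha, ← hb, ← Function.iterate_add_apply,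
        show b + q * a + a = b + p * a by rw [hq]; ring, Function.iterate_add_apply,
        hpmul a X hper]
    have hg : Monotone (Φ^[b + q * a]) := hΦm.iterate _
    have hle : x ≤ Φ^[b + q * a] x := by rw [hc]; exact hxy
    have hch := hg.monotone_iterate_of_le_map hle
    have h1 := hch (show 1 ≤ p from hp)
    simp only [Function.iterate_one] at h1
    rw [hc, ← Function.iterate_mul, mul_comm, hpmul _ x (hperA x hx)] at h1
    exact le_antisymm hxy h1
  have hle : A.card ≤ n.choose (n / 2) := by
    have := (supp_antichain hanti).sperner
    rwa [Finset.card_image_of_injective _ supp_inj, Fintype.card_fin] at this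
  rw [hcard]
  refine lt_of_le_of_ne hle fun hc => ?_
  have hid : ∀ x ∈ A, Φ x = x := fun x hx =>
    initial_id hn F hupd hmono π A hanti hc hmap hinj (List.finRange n) [] (by simp) x hx
  have hX : X ∈ A := (hmem X).2 ⟨0, rfl⟩
  have hsub : A ⊆ {X} := by
    intro y hy
    obtain ⟨k, rfl⟩ := (hmem y).1 hy
    rw [Finset.mem_singleton]
    exact Function.iterate_fixed (hid X hX) k
  have h1 := Finset.card_le_card hsub
  rw [Finset.card_singleton, hc] at h1
  have := Nat.choose_le_middle 1 n
  rw [Nat.choose_one_right] at this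
  omega
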